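/- arXiv:2401.11912 — 2 statements merged into one kernel-verified Lean document; each statement's English description precedes it below -/
import Mathlib

section
/- For every n ≥ 1 and every k with 1 ≤ k ≤ n, Black's single-peaked domain B_n on {1,…,n} is exactly (k, 2^{k-1})-abundant: the restriction of B_n to every k-element subset of {1,…,n} contains at least 2^{k-1} distinct linear orders, and there is some k-element subset whose restriction contains exactly 2^{k-1} distinct linear orders. -/
/-- `r` is a strict total order on `X`, supported on `X` (i.e. `r` never relates
elements outside `X`). -/
def IsLinearOrderOn {α : Type*} (X : Set α) (r : α → α → Prop) : Prop :=
  (∀ a b, r a b → a ∈ X ∧ b ∈ X) ∧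
  (∀ a ∈ X, ¬ r a a) ∧
  (∀ a ∈ X, ∀ b ∈ X, ∀ c ∈ X, r a b → r b c → r a c) ∧
  (∀ a ∈ X, ∀ b ∈ X, a ≠ b → r a b ∨ r b a)

/-- A domain on `X` is a set of linear orders on `X`. -/
def IsDomainOn {α : Type*} (X : Set α) (D : Set (α → α → Prop)) : Prop :=
  ∀ r ∈ D, IsLinearOrderOn X r

/-- The restriction of the order `r` to the subset `A`. -/
def restrictRel {α : Type*} (A : Set α) (r : α → α → Prop) : α → α → Prop :=
  fun a b => a ∈ A ∧ b ∈ A ∧ r a b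

/-- The restriction of the domain `D` to the subset `A`: the set of linear orders
on `A` induced by the orders in `D`. -/
def restrictDom {α : Type*} (A : Set α) (D : Set (α → α → Prop)) :
    Set (α → α → Prop) :=
  restrictRel A '' D

/-- `D` is `(k,s)`-abundant on `X`: its restriction to every `k`-element subset of `X`
contains at least `s` distinct linear orders. -/
def IsAbundant {α : Type*} (X : Set α) (D : Set (α → α → Prop)) (k s : ℕ) : Prop :=
  ∀ A : Set α, A ⊆ X → A.ncard = k → s ≤ (restrictDom A D).ncard

/-- `D` is exactly `(k,s)`-abundant: `(k,s)`-abundant but not `(k,s+1)`-abundant. -/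
def IsExactlyAbundant {α : Type*} (X : Set α) (D : Set (α → α → Prop)) (k s : ℕ) : Prop :=
  IsAbundant X D k s ∧ ¬ IsAbundant X D k (s + 1)

/-- Black's single-peaked domain on `{1,…,n}`: all linear orders on `{1,…,n}` that are
single-peaked with respect to the natural axis, i.e. for `a < b < c` the order never
ranks `b` below both `a` and `c`. -/
def blackSinglePeaked (n : ℕ) : Set (ℕ → ℕ → Prop) :=
  { r | IsLinearOrderOn (Set.Icc 1 n) r ∧
      ∀ a b c : ℕ, a ∈ Set.Icc 1 n → b ∈ Set.Icc 1 n → c ∈ Set.Icc 1 n →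
        a < b → b < c → ¬ (r a b ∧ r c b) }

/-!
A linear order on a nonempty finite set `X` is single-peaked exactly when its last alternative is
the least or the greatest element of `X` and the rest of the order is single-peaked. Peeling off
last alternatives shows that there are `2 ^ (|X| - 1)` such orders. It also shows that every
single-peaked order `r` on `A ⊆ X` extends to `X`: some endpoint of `X` lies outside `A` or is
ranked last by `r`; set it aside, extend the rest by induction and put the endpoint back in last
place. Hence the restriction of the domain to `A` consists of all single-peaked orders on `A`.
-/

section LinearOrders

variable {α : Type*} {A X : Set α} {r : α → α → Prop} {m : α}

theorem IsLinearOrderOn.asymm {a b : α} (hr : IsLinearOrderOn X r) (hab : r a b) : ¬ r b a := by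
  obtain ⟨supp, irrefl, trans, -⟩ := hr
  obtain ⟨ha, hb⟩ := supp a b hab
  exact fun hba => irrefl a ha (trans a ha b hb a ha hab hba)

theorem IsLinearOrderOn.restrictRel (hr : IsLinearOrderOn X r) (hAX : A ⊆ X) :
    IsLinearOrderOn A (restrictRel A r) := by
  obtain ⟨-, irrefl, trans, total⟩ := hr
  refine ⟨fun a b hab => ⟨hab.1, hab.2.1⟩, fun a ha haa => irrefl a (hAX ha) haa.2.2, ?_, ?_⟩
  · exact fun a ha b hb c hc hab hbc =>
      ⟨ha, hc, trans a (hAX ha) b (hAX hb) c (hAX hc) hab.2.2 hbc.2.2⟩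
  · exact fun a ha b hb hne => (total a (hAX ha) b (hAX hb) hne).imp
      (fun hab => ⟨ha, hb, hab⟩) (fun hba => ⟨hb, ha, hba⟩)

theorem restrictRel_eq_self (hr : IsLinearOrderOn X r) : restrictRel X r = r := by
  ext a b
  exact ⟨fun hab => hab.2.2, fun hab => ⟨(hr.1 a b hab).1, (hr.1 a b hab).2, hab⟩⟩

theorem isLinearOrderOn_iff_eq_bot_of_subsingleton (hX : X.Subsingleton) :
    IsLinearOrderOn X r ↔ r = ⊥ := by
  constructor
  · rintro ⟨supp, irrefl, -, -⟩
    ext a b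
    refine iff_of_false (fun hab => ?_) id
    obtain ⟨ha, hb⟩ := supp a b hab
    exact irrefl a ha (hX hb ha ▸ hab)
  · rintro rfl
    exact ⟨fun _ _ => False.elim, fun _ _ => id, fun _ _ _ _ _ _ => False.elim,
      fun a ha b hb hne => absurd (hX ha hb) hne⟩

/-- The relation `r` on `X` ranks `m` below all other elements of `X`. This is vacuous for
`m ∉ X`, so that it can be asked of an alternative that a restriction of `r` may have removed. -/
def RanksLast (X : Set α) (r : α → α → Prop) (m : α) : Prop :=
  ∀ a ∈ X, a ≠ m → m ∈ X → r a m

/-- The order on `X` which ranks `X \ {m}` according to `r` and puts `m` in last place. For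
`m ∉ X` nothing is added to `r`, which makes the operation commute with restriction. -/
def appendLast (X : Set α) (m : α) (r : α → α → Prop) : α → α → Prop :=
  fun a b => r a b ∨ a ∈ X ∧ b ∈ X ∧ a ≠ m ∧ b = m

theorem ranksLast_appendLast (X : Set α) (m : α) (r : α → α → Prop) :
    RanksLast X (appendLast X m r) m :=
  fun _ ha hne hm => Or.inr ⟨ha, hm, hne, rfl⟩

theorem IsLinearOrderOn.appendLast (hr : IsLinearOrderOn (X \ {m}) r) :
    IsLinearOrderOn X (appendLast X m r) := by
  obtain ⟨supp, irrefl, trans, total⟩ := hr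
  simp only [Set.mem_sdiff, Set.mem_singleton_iff] at supp irrefl trans total
  refine ⟨?_, ?_, ?_, ?_⟩ <;> unfold _root_.appendLast <;> grind

theorem restrictRel_appendLast (hAX : A ⊆ X) (hr : IsLinearOrderOn (X \ {m}) r) :
    restrictRel A (appendLast X m r) = appendLast A m (restrictRel (A \ {m}) r) := by
  ext a b
  have supp := hr.1 a b
  simp only [restrictRel, appendLast, Set.mem_sdiff, Set.mem_singleton_iff] at supp ⊢
  grind

theorem restrictRel_sdiff_singleton_appendLast (hr : IsLinearOrderOn (X \ {m}) r) :
    restrictRel (X \ {m}) (appendLast X m r) = r := by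
  ext a b
  have supp := hr.1 a b
  simp only [restrictRel, appendLast, Set.mem_sdiff, Set.mem_singleton_iff] at supp ⊢
  grind

theorem injOn_appendLast (X : Set α) (m : α) :
    Set.InjOn (appendLast X m) {r | IsLinearOrderOn (X \ {m}) r} :=
  Set.LeftInvOn.injOn (f₁' := restrictRel (X \ {m}))
    fun _ hr => restrictRel_sdiff_singleton_appendLast hr

theorem RanksLast.appendLast_restrictRel (hm : RanksLast X r m) (hr : IsLinearOrderOn X r) :
    appendLast X m (restrictRel (X \ {m}) r) = r := by
  ext a b
  have supp := hr.1 a b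
  have asymm := hr.asymm (a := a) (b := b)
  have last_left := hm a
  have last_right := hm b
  simp only [restrictRel, appendLast, Set.mem_sdiff, Set.mem_singleton_iff] at supp ⊢
  grind

end LinearOrders

section SinglePeaked

variable {α : Type*} [LinearOrder α] {A X : Set α} {r : α → α → Prop} {m : α}

/-- The linear orders on `X` that are single-peaked with respect to the order of `α`. Black's
domain `blackSinglePeaked n` is the case `X = {1, …, n}`. -/
def singlePeakedDomain (X : Set α) : Set (α → α → Prop) :=
  {r | IsLinearOrderOn X r ∧
    ∀ a b c : α, a ∈ X → b ∈ X → c ∈ X → a < b → b < c → ¬ (r a b ∧ r c b)}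

/-- `m` is one of the two ends of `X` along the axis `α`; these are the only alternatives that a
single-peaked order on `X` can rank last. -/
def IsEndpoint (X : Set α) (m : α) : Prop :=
  IsLeast X m ∨ IsGreatest X m

theorem restrictRel_mem_singlePeakedDomain (hr : r ∈ singlePeakedDomain X) (hAX : A ⊆ X) :
    restrictRel A r ∈ singlePeakedDomain A :=
  ⟨hr.1.restrictRel hAX, fun a b c ha hb hc hab hbc h =>
    hr.2 a b c (hAX ha) (hAX hb) (hAX hc) hab hbc ⟨h.1.2.2, h.2.2.2⟩⟩

theorem appendLast_mem_singlePeakedDomain (hm : IsEndpoint X m)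
    (hr : r ∈ singlePeakedDomain (X \ {m})) : appendLast X m r ∈ singlePeakedDomain X := by
  refine ⟨hr.1.appendLast, ?_⟩
  rintro a b c ha - hc hab hbc ⟨hrab, hrcb⟩
  have hbm : b ≠ m := by
    rintro rfl
    exact hm.elim (fun h => (h.2 ha).not_gt hab) (fun h => (h.2 hc).not_gt hbc)
  have rab : r a b := hrab.resolve_right fun h => hbm h.2.2.2
  have rcb : r c b := hrcb.resolve_right fun h => hbm h.2.2.2
  exact hr.2 a b c (hr.1.1 a b rab).1 (hr.1.1 a b rab).2 (hr.1.1 c b rcb).1 hab hbc ⟨rab, rcb⟩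

theorem rel_of_between {a b c : α} (hr : r ∈ singlePeakedDomain X) (hb : b ∈ X) (hac : r a c)
    (hbtw : a < b ∧ b < c ∨ c < b ∧ b < a) : r b c := by
  obtain ⟨⟨supp, -, trans, total⟩, peaked⟩ := hr
  obtain ⟨ha, hc⟩ := supp a c hac
  have hne : b ≠ c := hbtw.elim (fun h => h.2.ne) (fun h => h.1.ne')
  refine (total b hb c hc hne).resolve_right fun hcb => ?_
  have hab : r a b := trans a ha c hc b hb hac hcb
  rcases hbtw with ⟨hab', hbc'⟩ | ⟨hcb', hba'⟩
  · exact peaked a b c ha hb hc hab' hbc' ⟨hab, hcb⟩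
  · exact peaked c b a hc hb ha hcb' hba' ⟨hcb, hab⟩

theorem ranksLast_least_or_greatest {lo hi : α} (hlo : IsLeast X lo) (hhi : IsGreatest X hi)
    (hr : r ∈ singlePeakedDomain X) : RanksLast X r lo ∨ RanksLast X r hi := by
  rcases (hlo.2 hhi.1).eq_or_lt with rfl | hlt
  · exact Or.inl fun a ha hne => absurd (le_antisymm (hhi.2 ha) (hlo.2 ha)) hne
  rcases hr.1.2.2.2 lo hlo.1 hi hhi.1 hlt.ne with hlohi | hhilo
  · refine Or.inr fun a ha hne _ => ?_
    rcases (hlo.2 ha).eq_or_lt with rfl | hloa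
    · exact hlohi
    · exact rel_of_between hr ha hlohi (Or.inl ⟨hloa, (hhi.2 ha).lt_of_ne hne⟩)
  · refine Or.inl fun a ha hne _ => ?_
    rcases (hhi.2 ha).eq_or_lt with rfl | hahi
    · exact hhilo
    · exact rel_of_between hr ha hhilo (Or.inr ⟨(hlo.2 ha).lt_of_ne' hne, hahi⟩)

theorem exists_isLeast_isGreatest (hX : X.Finite) (hne : X.Nonempty) :
    ∃ lo hi, IsLeast X lo ∧ IsGreatest X hi := by
  obtain ⟨lo, hlo, hle⟩ := X.exists_min_image id hX hne
  obtain ⟨hi, hhi, hge⟩ := X.exists_max_image id hX hne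
  exact ⟨lo, hi, ⟨hlo, hle⟩, ⟨hhi, hge⟩⟩

theorem exists_isEndpoint_ranksLast (hX : X.Finite) (hne : X.Nonempty) (hAX : A ⊆ X)
    (hr : r ∈ singlePeakedDomain A) : ∃ m, IsEndpoint X m ∧ RanksLast A r m := by
  obtain ⟨lo, hi, hlo, hhi⟩ := exists_isLeast_isGreatest hX hne
  by_cases hloA : lo ∈ A
  · by_cases hhiA : hi ∈ A
    · exact (ranksLast_least_or_greatest ⟨hloA, fun a ha => hlo.2 (hAX ha)⟩
        ⟨hhiA, fun a ha => hhi.2 (hAX ha)⟩ hr).elim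
        (fun h => ⟨lo, Or.inl hlo, h⟩) (fun h => ⟨hi, Or.inr hhi, h⟩)
    · exact ⟨hi, Or.inr hhi, fun _ _ _ hmem => absurd hmem hhiA⟩
  · exact ⟨lo, Or.inl hlo, fun _ _ _ hmem => absurd hmem hloA⟩

theorem exists_mem_singlePeakedDomain_restrictRel_eq (hX : X.Finite) (hAX : A ⊆ X)
    (hr : r ∈ singlePeakedDomain A) : ∃ t ∈ singlePeakedDomain X, restrictRel A t = r := by
  induction hk : X.ncard generalizing X A r with
  | zero =>
    obtain rfl : X = ∅ := (Set.ncard_eq_zero hX).1 hk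
    obtain rfl : A = ∅ := Set.subset_empty_iff.1 hAX
    exact ⟨r, hr, restrictRel_eq_self hr.1⟩
  | succ k ih =>
    have hne : X.Nonempty := Set.nonempty_of_ncard_ne_zero (by lia)
    obtain ⟨m, hm, hlast⟩ := exists_isEndpoint_ranksLast hX hne hAX hr
    have hmX : m ∈ X := hm.elim (·.1) (·.1)
    obtain ⟨t, ht, htr⟩ := ih hX.sdiff (Set.sdiff_subset_sdiff_left hAX)
      (restrictRel_mem_singlePeakedDomain hr Set.sdiff_subset)
      (by rw [Set.ncard_sdiff_singleton_of_mem hmX, hk, Nat.add_sub_cancel])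
    refine ⟨appendLast X m t, appendLast_mem_singlePeakedDomain hm ht, ?_⟩
    calc restrictRel A (appendLast X m t)
        = appendLast A m (restrictRel (A \ {m}) t) := restrictRel_appendLast hAX ht.1
      _ = appendLast A m (restrictRel (A \ {m}) r) := by rw [htr]
      _ = r := hlast.appendLast_restrictRel hr.1

theorem restrictDom_singlePeakedDomain (hX : X.Finite) (hAX : A ⊆ X) :
    restrictDom A (singlePeakedDomain X) = singlePeakedDomain A := by
  apply Set.Subset.antisymm
  · rintro _ ⟨r, hr, rfl⟩
    exact restrictRel_mem_singlePeakedDomain hr hAX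
  · exact fun r hr => exists_mem_singlePeakedDomain_restrictRel_eq hX hAX hr

theorem image_appendLast_singlePeakedDomain (hm : IsEndpoint X m) :
    appendLast X m '' singlePeakedDomain (X \ {m}) =
      {r ∈ singlePeakedDomain X | RanksLast X r m} := by
  apply Set.Subset.antisymm
  · rintro _ ⟨r, hr, rfl⟩
    exact ⟨appendLast_mem_singlePeakedDomain hm hr, ranksLast_appendLast X m r⟩
  · rintro r ⟨hr, hlast⟩
    exact ⟨_, restrictRel_mem_singlePeakedDomain hr Set.sdiff_subset,
      hlast.appendLast_restrictRel hr.1⟩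

theorem encard_singlePeakedDomain_ranksLast (hm : IsEndpoint X m) :
    {r ∈ singlePeakedDomain X | RanksLast X r m}.encard =
      (singlePeakedDomain (X \ {m})).encard := by
  rw [← image_appendLast_singlePeakedDomain hm]
  exact ((injOn_appendLast X m).mono fun _ hr => hr.1).encard_image

theorem encard_singlePeakedDomain_eq_add {lo hi : α} (hlo : IsLeast X lo)
    (hhi : IsGreatest X hi) (hne : lo ≠ hi) :
    (singlePeakedDomain X).encard =
      (singlePeakedDomain (X \ {lo})).encard + (singlePeakedDomain (X \ {hi})).encard := by
  have hunion : singlePeakedDomain X = {r ∈ singlePeakedDomain X | RanksLast X r lo} ∪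
      {r ∈ singlePeakedDomain X | RanksLast X r hi} := by
    rw [← Set.sep_or, eq_comm, Set.sep_eq_self_iff_mem_true]
    exact fun r hr => ranksLast_least_or_greatest hlo hhi hr
  have hdisj : Disjoint {r ∈ singlePeakedDomain X | RanksLast X r lo}
      {r ∈ singlePeakedDomain X | RanksLast X r hi} :=
    Set.disjoint_left.2 fun r hrlo hrhi =>
      hrlo.1.1.asymm (hrlo.2 hi hhi.1 hne.symm hlo.1) (hrhi.2 lo hlo.1 hne hhi.1)
  rw [hunion, Set.encard_union_eq hdisj, encard_singlePeakedDomain_ranksLast (Or.inl hlo),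
    encard_singlePeakedDomain_ranksLast (Or.inr hhi)]

theorem singlePeakedDomain_eq_singleton_bot (hX : X.Subsingleton) :
    singlePeakedDomain X = {⊥} := by
  ext r
  rw [Set.mem_singleton_iff, ← isLinearOrderOn_iff_eq_bot_of_subsingleton hX]
  exact and_iff_left fun a b c ha hb _ hab => absurd (hX ha hb) hab.ne

theorem encard_singlePeakedDomain {k : ℕ} (hX : X.encard = k + 1) :
    (singlePeakedDomain X).encard = 2 ^ k := by
  induction k generalizing X with
  | zero =>
    have hsub : X.Subsingleton := Set.encard_le_one_iff_subsingleton.1 (by simp [hX])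
    rw [singlePeakedDomain_eq_singleton_bot hsub, Set.encard_singleton, pow_zero]
  | succ k ih =>
    have hfin : X.Finite := Set.finite_of_encard_eq_coe (k := k + 1 + 1) (by exact_mod_cast hX)
    have hnt : X.Nontrivial := Set.one_lt_encard_iff_nontrivial.1 (by rw [hX]; norm_cast; lia)
    obtain ⟨lo, hi, hlo, hhi⟩ := exists_isLeast_isGreatest hfin hnt.nonempty
    have hne : lo ≠ hi := by
      rintro rfl
      exact hnt.not_subsingleton fun a ha b hb =>
        ((hhi.2 ha).antisymm (hlo.2 ha)).trans ((hlo.2 hb).antisymm (hhi.2 hb))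
    have hcard {m : α} (hm : m ∈ X) : (X \ {m}).encard = k + 1 := by
      rw [Set.encard_sdiff_singleton_of_mem hm, hX]
      norm_cast
    rw [encard_singlePeakedDomain_eq_add hlo hhi hne, ih (hcard hlo.1), ih (hcard hhi.1),
      pow_succ, mul_two]

theorem ncard_restrictDom_singlePeakedDomain (hX : X.Finite) (hAX : A ⊆ X) (hA : A.Nonempty) :
    (restrictDom A (singlePeakedDomain X)).ncard = 2 ^ (A.ncard - 1) := by
  have hfin : A.Finite := hX.subset hAX
  have hcard : A.encard = (A.ncard - 1 : ℕ) + 1 := by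
    rw [← hfin.cast_ncard_eq, ← Nat.cast_add_one, Nat.sub_add_cancel ((Set.ncard_pos hfin).2 hA)]
  rw [restrictDom_singlePeakedDomain hX hAX, Set.ncard_def, encard_singlePeakedDomain hcard]
  norm_cast

theorem black_single_peaked_exactly_abundant_general {k : ℕ} (hX : X.Finite) (hk : 1 ≤ k)
    (hkX : k ≤ X.ncard) : IsExactlyAbundant X (singlePeakedDomain X) k (2 ^ (k - 1)) := by
  have hcount {A : Set α} (hAX : A ⊆ X) (hA : A.ncard = k) :
      (restrictDom A (singlePeakedDomain X)).ncard = 2 ^ (k - 1) := by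
    rw [ncard_restrictDom_singlePeakedDomain hX hAX
      (Set.nonempty_of_ncard_ne_zero (by lia)), hA]
  refine ⟨fun A hAX hA => (hcount hAX hA).ge, fun habundant => ?_⟩
  obtain ⟨A, hAX, hA⟩ := Set.exists_subset_card_eq hkX
  exact Nat.not_succ_le_self _ (hcount hAX hA ▸ habundant A hAX hA)

end SinglePeaked

/-- For every `n ≥ 1` and `1 ≤ k ≤ n`, Black's single-peaked domain on `{1,…,n}` is
exactly `(k, 2^(k-1))`-abundant. -/
theorem black_single_peaked_exactly_abundant (n k : ℕ) (hn : 1 ≤ n)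
    (hk1 : 1 ≤ k) (hkn : k ≤ n) :
    IsExactlyAbundant (Set.Icc 1 n) (blackSinglePeaked n) k (2 ^ (k - 1)) :=
  black_single_peaked_exactly_abundant_general (Set.finite_Icc 1 n) hk1 (by simpa using hkn)
end

section
/- The four linear orders on {1,…,8} given (from most preferred to least preferred) by P1 = 1,2,3,4,5,6,7,8; P2 = 4,3,2,1,8,7,6,5; P3 = 6,5,8,7,2,1,4,3; P4 = 7,8,5,6,3,4,1,2 form a domain of size 4 that is (3,4)-abundant: for every 3-element subset T of {1,…,8}, the four orders induce four pairwise distinct linear orders on T. Moreover, the domain {P1, P2, P3} of size 3 is (3,3)-abundant: for every 3-element subset T, these three orders induce three pairwise distinct linear orders on T. -/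
/-- The linear order encoded by a duplicate-free list `l` (most preferred first):
`a` is ranked above `b` iff `a` occurs strictly before `b` in `l`. -/
def listRel (l : List ℕ) : ℕ → ℕ → Prop :=
  fun a b => ∃ i j : Fin l.length, (i : ℕ) < (j : ℕ) ∧ l.get i = a ∧ l.get j = b

/-!
Shift the alternatives to `0, …, 7` and write them in binary. Then the four orders rank `x` by the
value of `x ^^^ k`, with `k` running through the even-weight words `0, 3, 5, 6`. Two alternatives
are compared at their highest differing bit, and xor with `k` flips that comparison exactly when
`k` has this bit set. So the orders of `k` and `m` agree on a pair exactly when `k` and `m` agree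
at the highest bit where the pair differs. Distinct even-weight words of length three agree at a
single bit; three alternatives cannot pairwise differ at one and the same bit, so no triple is
ranked identically by two of the orders.
-/

theorem restrictRel_eq_restrictRel_iff {α : Type*} {A : Set α} {r s : α → α → Prop} :
    restrictRel A r = restrictRel A s ↔ ∀ a ∈ A, ∀ b ∈ A, (r a b ↔ s a b) := by
  simp only [funext_iff, restrictRel, eq_iff_iff, and_congr_right_iff]
  exact ⟨fun h a ha b hb => h a b ha hb, fun h a b ha hb => h a ha b hb⟩

theorem exists_testBit_ne_and_forall_lt_testBit_eq {a b : ℕ} (hab : a ≠ b) :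
    ∃ i, a.testBit i ≠ b.testBit i ∧ ∀ j, i < j → a.testBit j = b.testBit j := by
  obtain ⟨i, hi, hlt⟩ := Nat.exists_most_significant_bit (Nat.xor_ne_zero_iff.mpr hab)
  simp only [Nat.testBit_xor, bne_iff_ne, bne_eq_false_iff_eq] at hi hlt
  exact ⟨i, hi, hlt⟩

theorem lt_iff_testBit_of_forall_lt_testBit_eq {a b i : ℕ} (hi : a.testBit i ≠ b.testBit i)
    (hlt : ∀ j, i < j → a.testBit j = b.testBit j) : a < b ↔ b.testBit i = true := by
  cases hb : b.testBit i
  · have ha : a.testBit i = true := by simpa [hb] using hi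
    have hba : b < a := Nat.lt_of_testBit i hb ha fun j hj => (hlt j hj).symm
    simpa using hba.le
  · have ha : a.testBit i = false := by simpa [hb] using hi
    simpa using Nat.lt_of_testBit i ha hb hlt

theorem exists_testBit_ne_and_forall_xor_lt_xor_iff {a b : ℕ} (hab : a ≠ b) :
    ∃ i, a.testBit i ≠ b.testBit i ∧
      ∀ k, a ^^^ k < b ^^^ k ↔ (b.testBit i ^^ k.testBit i) = true := by
  obtain ⟨i, hi, hlt⟩ := exists_testBit_ne_and_forall_lt_testBit_eq hab
  refine ⟨i, hi, fun k => ?_⟩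
  rw [← Nat.testBit_xor]
  apply lt_iff_testBit_of_forall_lt_testBit_eq
  · simpa only [Nat.testBit_xor, ne_eq, Bool.xor_left_inj] using hi
  · intro j hj
    simp only [Nat.testBit_xor, hlt j hj]

theorem lt_of_testBit_ne {n a b i : ℕ} (ha : a < 2 ^ n) (hb : b < 2 ^ n)
    (hi : a.testBit i ≠ b.testBit i) : i < n := by
  contrapose! hi
  have hpow : 2 ^ n ≤ 2 ^ i := Nat.pow_le_pow_right two_pos hi
  rw [Nat.testBit_lt_two_pow (ha.trans_le hpow), Nat.testBit_lt_two_pow (hb.trans_le hpow)]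

/-- The `n`-bit words `k` and `m` agree in at most one position, i.e. their Hamming distance is at
least `n - 1`. This is what separates the orders given by `k` and `m` on every triple. -/
def AgreeInAtMostOneBit (n k m : ℕ) : Prop :=
  ∀ i < n, ∀ j < n, k.testBit i = m.testBit i → k.testBit j = m.testBit j → i = j

instance (n k m : ℕ) : Decidable (AgreeInAtMostOneBit n k m) :=
  inferInstanceAs (Decidable (∀ i < n, ∀ j < n, _ → _ → _))

theorem exists_testBit_ne_of_xor_lt_xor_iff {n k m a b : ℕ} (ha : a < 2 ^ n) (hb : b < 2 ^ n)
    (hab : a ≠ b) (h : a ^^^ k < b ^^^ k ↔ a ^^^ m < b ^^^ m) :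
    ∃ i < n, a.testBit i ≠ b.testBit i ∧ k.testBit i = m.testBit i := by
  obtain ⟨i, hi, hiff⟩ := exists_testBit_ne_and_forall_xor_lt_xor_iff hab
  rw [hiff, hiff, ← Bool.eq_iff_iff, Bool.xor_right_inj] at h
  exact ⟨i, lt_of_testBit_ne ha hb hi, hi, h⟩

theorem AgreeInAtMostOneBit.not_forall_xor_lt_xor_iff {n k m a b c : ℕ}
    (hkm : AgreeInAtMostOneBit n k m) (ha : a < 2 ^ n) (hb : b < 2 ^ n) (hc : c < 2 ^ n)
    (hab : a ≠ b) (hac : a ≠ c) (hbc : b ≠ c) :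
    ¬ ((a ^^^ k < b ^^^ k ↔ a ^^^ m < b ^^^ m) ∧ (a ^^^ k < c ^^^ k ↔ a ^^^ m < c ^^^ m) ∧
      (b ^^^ k < c ^^^ k ↔ b ^^^ m < c ^^^ m)) := by
  rintro ⟨agree_ab, agree_ac, agree_bc⟩
  obtain ⟨i, hi, habi, hkmi⟩ := exists_testBit_ne_of_xor_lt_xor_iff ha hb hab agree_ab
  obtain ⟨j, hj, hacj, hkmj⟩ := exists_testBit_ne_of_xor_lt_xor_iff ha hc hac agree_ac
  obtain ⟨l, hl, hbcl, hkml⟩ := exists_testBit_ne_of_xor_lt_xor_iff hb hc hbc agree_bc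
  obtain rfl : i = j := hkm i hi j hj hkmi hkmj
  obtain rfl : i = l := hkm i hi l hl hkmi hkml
  exact hbcl ((Bool.eq_not_of_ne habi.symm).trans (Bool.eq_not_of_ne hacj.symm).symm)

/-- The ranking of `1, …, 2 ^ n` that has `x + 1` in position `x ^^^ k`, positions being counted
from `0`; since xor with `k` is an involution, position `i` holds `(i ^^^ k) + 1`. -/
def xorRanking (n k : ℕ) : List ℕ :=
  (List.range (2 ^ n)).map fun i => (i ^^^ k) + 1

/-- The domain on `{1, …, 2 ^ n}` of the orders given by the rankings `xorRanking n k`, `k ∈ K`. -/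
def xorDomain (n : ℕ) (K : Set ℕ) : Set (ℕ → ℕ → Prop) :=
  (fun k => listRel (xorRanking n k)) '' K

theorem getElem_xorRanking {n k i : ℕ} (hi : i < (xorRanking n k).length) :
    (xorRanking n k)[i] = (i ^^^ k) + 1 := by
  simp [xorRanking]

theorem listRel_xorRanking_iff {n k a b : ℕ} (hk : k < 2 ^ n) (ha : a < 2 ^ n) (hb : b < 2 ^ n) :
    listRel (xorRanking n k) (a + 1) (b + 1) ↔ a ^^^ k < b ^^^ k := by
  have hlen : (xorRanking n k).length = 2 ^ n := by simp [xorRanking]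
  constructor
  · rintro ⟨i, j, hij, hi, hj⟩
    rw [List.get_eq_getElem, getElem_xorRanking, Nat.add_right_cancel_iff] at hi hj
    rwa [← hi, ← hj, Nat.xor_xor_cancel_right, Nat.xor_xor_cancel_right]
  · intro hlt
    exact ⟨⟨a ^^^ k, hlen ▸ Nat.xor_lt_two_pow ha hk⟩, ⟨b ^^^ k, hlen ▸ Nat.xor_lt_two_pow hb hk⟩,
      hlt, by simp [getElem_xorRanking], by simp [getElem_xorRanking]⟩

theorem injOn_listRel_xorRanking (n : ℕ) :
    Set.InjOn (fun k => listRel (xorRanking n k)) (Set.Iio (2 ^ n)) := by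
  intro k hk m hm hkm
  by_contra hne
  -- `k + 1` is the top alternative for `k`, and `m + 1` the top one for `m`.
  have k_above_m : listRel (xorRanking n k) (k + 1) (m + 1) := by
    rw [listRel_xorRanking_iff hk hk hm, Nat.xor_self]
    exact Nat.pos_of_ne_zero (Nat.xor_ne_zero_iff.mpr (Ne.symm hne))
  rw [show listRel (xorRanking n k) = listRel (xorRanking n m) from hkm,
    listRel_xorRanking_iff hm hk hm, Nat.xor_self] at k_above_m
  exact Nat.not_lt_zero _ k_above_m

theorem AgreeInAtMostOneBit.restrictRel_ne {n k m : ℕ} (hkm : AgreeInAtMostOneBit n k m)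
    (hk : k < 2 ^ n) (hm : m < 2 ^ n) {A : Set ℕ} (hA : A ⊆ Set.Icc 1 (2 ^ n))
    (hcard : A.ncard = 3) :
    restrictRel A (listRel (xorRanking n k)) ≠ restrictRel A (listRel (xorRanking n m)) := by
  intro heq
  have agree : ∀ a < 2 ^ n, ∀ b < 2 ^ n, a + 1 ∈ A → b + 1 ∈ A →
      (a ^^^ k < b ^^^ k ↔ a ^^^ m < b ^^^ m) := fun a ha b hb haA hbA => by
    simpa only [listRel_xorRanking_iff, hk, hm, ha, hb] using
      restrictRel_eq_restrictRel_iff.mp heq _ haA _ hbA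
  have exists_pred : ∀ x ∈ A, ∃ y < 2 ^ n, x = y + 1 := fun x hx =>
    ⟨x - 1, by grind [hA hx], by grind [hA hx]⟩
  obtain ⟨x, y, z, hxy, hxz, hyz, rfl⟩ := Set.ncard_eq_three.mp hcard
  obtain ⟨a, ha, rfl⟩ := exists_pred x (by simp)
  obtain ⟨b, hb, rfl⟩ := exists_pred y (by simp)
  obtain ⟨c, hc, rfl⟩ := exists_pred z (by simp)
  rw [Nat.succ_ne_succ_iff] at hxy hxz hyz
  exact hkm.not_forall_xor_lt_xor_iff ha hb hc hxy hxz hyz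
    ⟨agree a ha b hb (by simp) (by simp), agree a ha c hc (by simp) (by simp),
      agree b hb c hc (by simp) (by simp)⟩

section xorDomain

variable {n : ℕ} {K : Finset ℕ}

theorem ncard_xorDomain (hK : ∀ k ∈ K, k < 2 ^ n) : (xorDomain n K).ncard = K.card := by
  rw [xorDomain, ((injOn_listRel_xorRanking n).mono hK).ncard_image,
    Set.ncard_coe_finset]

theorem isAbundant_xorDomain (hK : ∀ k ∈ K, k < 2 ^ n)
    (hagree : ∀ k ∈ K, ∀ m ∈ K, k ≠ m → AgreeInAtMostOneBit n k m) :
    IsAbundant (Set.Icc 1 (2 ^ n)) (xorDomain n K) 3 K.card := by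
  intro A hA hcard
  have hinj : Set.InjOn (fun k => restrictRel A (listRel (xorRanking n k))) K := by
    intro k hk m hm heq
    by_contra hne
    exact (hagree k hk m hm hne).restrictRel_ne (hK k hk) (hK m hm) hA hcard heq
  rw [restrictDom, xorDomain, Set.image_image, hinj.ncard_image,
    Set.ncard_coe_finset]

end xorDomain

/-- The domain on `{1,…,8}` consisting of the four orders
`12345678`, `43218765`, `65872143`, `78563412` has size 4 and is `(3,4)`-abundant,
and its first three orders form a domain of size 3 which is `(3,3)`-abundant. -/
theorem small_abundant_domains :
    ({listRel [1,2,3,4,5,6,7,8], listRel [4,3,2,1,8,7,6,5],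
      listRel [6,5,8,7,2,1,4,3], listRel [7,8,5,6,3,4,1,2]} :
        Set (ℕ → ℕ → Prop)).ncard = 4 ∧
    IsAbundant (Set.Icc 1 8)
      {listRel [1,2,3,4,5,6,7,8], listRel [4,3,2,1,8,7,6,5],
       listRel [6,5,8,7,2,1,4,3], listRel [7,8,5,6,3,4,1,2]} 3 4 ∧
    ({listRel [1,2,3,4,5,6,7,8], listRel [4,3,2,1,8,7,6,5],
      listRel [6,5,8,7,2,1,4,3]} : Set (ℕ → ℕ → Prop)).ncard = 3 ∧
    IsAbundant (Set.Icc 1 8)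
      {listRel [1,2,3,4,5,6,7,8], listRel [4,3,2,1,8,7,6,5],
       listRel [6,5,8,7,2,1,4,3]} 3 3 := by
  have hfour : xorDomain 3 ({0, 3, 5, 6} : Finset ℕ) =
      {listRel [1,2,3,4,5,6,7,8], listRel [4,3,2,1,8,7,6,5],
       listRel [6,5,8,7,2,1,4,3], listRel [7,8,5,6,3,4,1,2]} := by
    simp [xorDomain, xorRanking, Set.image_insert_eq, List.range_succ]
  have hthree : xorDomain 3 ({0, 3, 5} : Finset ℕ) =
      {listRel [1,2,3,4,5,6,7,8], listRel [4,3,2,1,8,7,6,5],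
       listRel [6,5,8,7,2,1,4,3]} := by
    simp [xorDomain, xorRanking, Set.image_insert_eq, List.range_succ]
  rw [← hfour, ← hthree]
  exact ⟨ncard_xorDomain (by decide), isAbundant_xorDomain (n := 3) (by decide) (by decide),
    ncard_xorDomain (by decide), isAbundant_xorDomain (n := 3) (by decide) (by decide)⟩
end
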